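/- Let Γ = (T, ℓ) be a normal bunch of grapes (with ℓ(v) ≥ 1 at every degree-2 vertex of T). Then: (i) every standard subgraph H of Γ is the union of a subtree T′ of T (possibly a single vertex) whose vertex set is a proper subset of V(T), together with a collection of grapes of Γ attached at vertices of T′; (ii) a subgraph H of Γ is maximally standard if and only if H = Γ_{t,i} for some edge t of T and some i ∈ {1, 2}, i.e. H is a t-component of Γ. -/

import Mathlib

/-!
The double-complement argument rests on two facts about subgraphs in which every vertex has degree
at least two (`MinDegTwo`): pruning a graph never removes a vertex of such a subgraph
(`MinDegTwo.le_prune`), and both `t`-components of a normal bunch of grapes are such subgraphs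
(`tComponent_minDegTwo`; this is where the grapes at stem vertices of degree one and two enter).
Hence the two `t`-components of an edge are each other's orthogonal complements, and being connected
they are maximally standard.

A standard subgraph `H` is connected, leafless and has an edge, so it satisfies `MinDegTwo`; a
non-stem vertex of a grape has degree two in `Γ`, so `H` contains the whole of every grape it meets
off the stem. The stem edges between stem vertices of `H` are bridges of `T`, so connectedness forces
them into `H`. If all stem vertices were in `H`, the complement would have maximal degree one and
a single pruning step would leave no edge.

If `H` is maximally standard, the stem parts `S`, `S'` of `H` and `H^⊥` are disjoint subtrees, and
some edge `ab` of `T` with `a ∈ S`, `b ∉ S` separates them. So `H` lies in the `a`-side `A` and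
`H^⊥` in the `b`-side `B`; since `B` satisfies `MinDegTwo` and avoids `H`, also `B ≤ H^⊥`. Thus `H^⊥ = B` and
`H = H^⊥⊥ = B^⊥ = A`.
-/

open scoped Classical

noncomputable section

namespace GraphBraid

/-- The vertex type of a bunch of grapes over a stem with vertex type `VT`:
the stem vertices together with, for each vertex `v` and each of the `ℓ v` grapes at `v`,
two new vertices completing a triangle at `v`. -/
def GrapeVert (VT : Type) (ℓ : VT → ℕ) : Type :=
  VT ⊕ (Σ v : VT, Fin (ℓ v) × Fin 2)

instance (VT : Type) [Fintype VT] [DecidableEq VT] (ℓ : VT → ℕ) : Fintype (GrapeVert VT ℓ) := by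
  unfold GrapeVert; infer_instance

instance (VT : Type) [DecidableEq VT] (ℓ : VT → ℕ) : DecidableEq (GrapeVert VT ℓ) := by
  unfold GrapeVert; infer_instance

/-- The stem vertex underlying a vertex of the bunch of grapes. -/
def stemOf {VT : Type} {ℓ : VT → ℕ} : GrapeVert VT ℓ → VT :=
  Sum.elim id (fun p => p.1)

/-- The bunch of grapes `Γ = (T, ℓ)`: the graph obtained from the stem `T` by attaching
`ℓ v` triangles (grapes) at each vertex `v` of `T`. -/
def bunchOfGrapes {VT : Type} (T : SimpleGraph VT) (ℓ : VT → ℕ) :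
    SimpleGraph (GrapeVert VT ℓ) :=
  SimpleGraph.fromEdgeSet
    ({e | ∃ u v : VT, T.Adj u v ∧ e = s(Sum.inl u, Sum.inl v)} ∪
     {e | ∃ (v : VT) (i : Fin (ℓ v)) (j : Fin 2), e = s(Sum.inl v, Sum.inr ⟨v, (i, j)⟩)} ∪
     {e | ∃ (v : VT) (i : Fin (ℓ v)), e = s(Sum.inr ⟨v, (i, 0)⟩, Sum.inr ⟨v, (i, 1)⟩)})

/-- A bunch of grapes is normal when at least two distinct stem vertices carry a grape and
every leaf of the stem carries a grape; following the standing assumption, every degree-2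
stem vertex also carries a grape.  The stem is required to be a finite tree. -/
def IsNormalGrapes {VT : Type} (T : SimpleGraph VT) (ℓ : VT → ℕ) : Prop :=
  T.IsTree ∧
  (∃ v w : VT, v ≠ w ∧ 1 ≤ ℓ v ∧ 1 ≤ ℓ w) ∧
  (∀ v : VT, (T.neighborSet v).ncard = 1 → 1 ≤ ℓ v) ∧
  (∀ v : VT, (T.neighborSet v).ncard = 2 → 1 ≤ ℓ v)

/-- Membership in the side of the edge `{a,b}` of the stem containing `a`: a vertex of the
bunch of grapes lies in the `t`-component `Γ_{t,1}` (for `t = {a,b}`) when its stem vertex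
is reachable from `a` after deleting the edge `{a,b}` from `T`. -/
def inSide {VT : Type} (T : SimpleGraph VT) (ℓ : VT → ℕ) (a b : VT)
    (x : GrapeVert VT ℓ) : Prop :=
  (T.deleteEdges {s(a, b)}).Reachable a (stemOf x)



/-- A cycle subgraph: a subgraph with at least one edge which is connected and all of whose
vertices have degree exactly two (inside the subgraph). -/
def IsCycleSubgraph {W : Type*} {G : SimpleGraph W} (H : G.Subgraph) : Prop :=
  H.edgeSet.Nonempty ∧ H.Connected ∧ ∀ v ∈ H.verts, (H.neighborSet v).ncard = 2

/-- A subgraph is leafless when no vertex has degree one inside the subgraph. -/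
def IsLeafless {W : Type*} {G : SimpleGraph W} (H : G.Subgraph) : Prop :=
  ∀ v ∈ H.verts, (H.neighborSet v).ncard ≠ 1

variable {V : Type} [Fintype V] [DecidableEq V]

/-- One pruning step: delete all vertices of degree at most one. -/
def pruneStep {Γ : SimpleGraph V} (H : Γ.Subgraph) : Γ.Subgraph :=
  H.deleteVerts {v | (H.neighborSet v).ncard ≤ 1}

/-- Iterated pruning: delete vertices of degree at most one until none remain (iterating
`card V` times guarantees stabilization on a finite graph). -/
def prune {Γ : SimpleGraph V} (H : Γ.Subgraph) : Γ.Subgraph :=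
  pruneStep^[Fintype.card V] H

/-- The orthogonal complement of a subgraph: prune the induced subgraph on the complement
of its vertex set. -/
def orth {Γ : SimpleGraph V} (H : Γ.Subgraph) : Γ.Subgraph :=
  prune ((⊤ : Γ.Subgraph).deleteVerts H.verts)

/-- A standard subgraph: connected, with at least one edge, leafless, and with nontrivial
orthogonal complement. -/
def IsStandard {Γ : SimpleGraph V} (H : Γ.Subgraph) : Prop :=
  H.Connected ∧ H.edgeSet.Nonempty ∧ IsLeafless H ∧ (orth H).edgeSet.Nonempty

/-- A maximally standard subgraph: standard, with standard orthogonal complement, and equal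
to its double orthogonal complement. -/
def IsMaxStandard {Γ : SimpleGraph V} (H : Γ.Subgraph) : Prop :=
  IsStandard H ∧ IsStandard (orth H) ∧ orth (orth H) = H

/-- `K` is a connected component of `H`: a maximal connected subgraph of `H`. -/
def IsComponentOf {Γ : SimpleGraph V} (K H : Γ.Subgraph) : Prop :=
  K ≤ H ∧ K.Connected ∧ ∀ K' : Γ.Subgraph, K ≤ K' → K' ≤ H → K'.Connected → K' = K

/-- Two vertex-disjoint subgraphs are separable if they are contained in a pair of
vertex-disjoint leafless subgraphs. -/
def Separable {Γ : SimpleGraph V} (Λ₁ Λ₂ : Γ.Subgraph) : Prop :=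
  ∃ G₁ G₂ : Γ.Subgraph, IsLeafless G₁ ∧ IsLeafless G₂ ∧ Disjoint G₁.verts G₂.verts ∧
    Λ₁ ≤ G₁ ∧ Λ₂ ≤ G₂

/-- The curve graph `C(Γ)`: vertices are the cycle subgraphs which are standard, adjacent
when distinct and vertex-disjoint. -/
def curveGraph (Γ : SimpleGraph V) :
    SimpleGraph {H : Γ.Subgraph // IsCycleSubgraph H ∧ IsStandard H} :=
  SimpleGraph.fromRel fun H K => Disjoint H.1.verts K.1.verts

/-- The graph `S(Γ)` of standard subgraphs: `Γ₁`, `Γ₂` are adjacent when they are distinct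
and `Γ₁ ⊆ Γ₂ ∪ Γ₂^⊥` or `Γ₂ ⊆ Γ₁ ∪ Γ₁^⊥`. -/
def standardGraph (Γ : SimpleGraph V) :
    SimpleGraph {H : Γ.Subgraph // IsStandard H} :=
  SimpleGraph.fromRel fun H K => H.1 ≤ K.1 ⊔ orth K.1 ∨ K.1 ≤ H.1 ⊔ orth H.1

/-- The graph `M(Γ)`: the subgraph of `S(Γ)` induced on the maximally standard
subgraphs. -/
def maxStandardGraph (Γ : SimpleGraph V) :
    SimpleGraph {H : {H : Γ.Subgraph // IsStandard H} // IsMaxStandard H.1} :=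
  (standardGraph Γ).induce {H : {H : Γ.Subgraph // IsStandard H} | IsMaxStandard H.1}



/-- The three edges of the grape indexed by `g = (v, i)`. -/
def grapeEdges {VT : Type} {ℓ : VT → ℕ} (g : Σ v : VT, Fin (ℓ v)) :
    Set (Sym2 (GrapeVert VT ℓ)) :=
  {s(Sum.inl g.1, Sum.inr ⟨g.1, (g.2, 0)⟩),
   s(Sum.inl g.1, Sum.inr ⟨g.1, (g.2, 1)⟩),
   s(Sum.inr ⟨g.1, (g.2, 0)⟩, Sum.inr ⟨g.1, (g.2, 1)⟩)}

/-- The `t`-component of the bunch of grapes containing the endpoint `a` of the stem edge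
`t = {a,b}`, as an induced subgraph. -/
def tComponent {VT : Type} (T : SimpleGraph VT) (ℓ : VT → ℕ) (a b : VT) :
    (bunchOfGrapes T ℓ).Subgraph :=
  (⊤ : (bunchOfGrapes T ℓ).Subgraph).induce {x | inSide T ℓ a b x}

set_option linter.unusedSectionVars false

/-! ### Pruning -/

/-- Every vertex of the subgraph has degree at least two inside it. -/
def MinDegTwo {W : Type*} {G : SimpleGraph W} (H : G.Subgraph) : Prop :=
  ∀ v ∈ H.verts, 2 ≤ (H.neighborSet v).ncard

section Prune

variable {Γ : SimpleGraph V}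

lemma pruneStep_le (H : Γ.Subgraph) : pruneStep H ≤ H :=
  SimpleGraph.Subgraph.deleteVerts_le

lemma iterate_pruneStep_le (n : ℕ) (H : Γ.Subgraph) : pruneStep^[n] H ≤ H := by
  induction n with
  | zero => exact le_rfl
  | succ n ih =>
    rw [Function.iterate_succ_apply']
    exact (pruneStep_le _).trans ih

lemma MinDegTwo.le_pruneStep {H K : Γ.Subgraph} (hH : MinDegTwo H) (hHK : H ≤ K) :
    H ≤ pruneStep K := by
  have key : ∀ v ∈ H.verts, v ∉ {v | (K.neighborSet v).ncard ≤ 1} := by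
    intro v hv hv'
    have h1 := hH v hv
    have h2 : (H.neighborSet v).ncard ≤ (K.neighborSet v).ncard :=
      Set.ncard_le_ncard (SimpleGraph.Subgraph.neighborSet_subset_of_subgraph hHK v)
        (Set.toFinite _)
    have h3 : (K.neighborSet v).ncard ≤ 1 := hv'
    omega
  refine ⟨fun v hv => ⟨hHK.1 hv, key v hv⟩, fun v w hvw => ?_⟩
  rw [pruneStep, SimpleGraph.Subgraph.deleteVerts_adj]
  exact ⟨hHK.1 (H.edge_vert hvw), key _ (H.edge_vert hvw), hHK.1 (H.edge_vert hvw.symm),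
    key _ (H.edge_vert hvw.symm), hHK.2 hvw⟩

lemma MinDegTwo.le_prune {H K : Γ.Subgraph} (hH : MinDegTwo H) (hHK : H ≤ K) :
    H ≤ prune K := by
  unfold prune
  induction Fintype.card V with
  | zero => exact hHK
  | succ n ih =>
    rw [Function.iterate_succ_apply']
    exact hH.le_pruneStep ih

lemma MinDegTwo.prune_eq {H : Γ.Subgraph} (hH : MinDegTwo H) : prune H = H :=
  le_antisymm (iterate_pruneStep_le _ _) (hH.le_prune le_rfl)

lemma prune_le_pruneStep [Nonempty V] (H : Γ.Subgraph) : prune H ≤ pruneStep H := by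
  unfold prune
  obtain ⟨n, hn⟩ := Nat.exists_eq_succ_of_ne_zero (Fintype.card_ne_zero (α := V))
  rw [hn, Function.iterate_succ_apply]
  exact iterate_pruneStep_le _ _

lemma orth_le (H : Γ.Subgraph) : orth H ≤ (⊤ : Γ.Subgraph).deleteVerts H.verts :=
  iterate_pruneStep_le _ _

lemma IsStandard.minDegTwo {H : Γ.Subgraph} (hH : IsStandard H) : MinDegTwo H := by
  obtain ⟨hc, ⟨e, he⟩, hl, -⟩ := hH
  induction e with | h x y =>
  rw [SimpleGraph.Subgraph.mem_edgeSet] at he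
  have : Nontrivial H.verts :=
    ⟨⟨x, H.edge_vert he⟩, ⟨y, H.edge_vert he.symm⟩, fun h => he.ne (congrArg Subtype.val h)⟩
  intro v hv
  obtain ⟨w, hw⟩ := hc.preconnected.exists_adj_of_nontrivial ⟨v, hv⟩
  have h0 : (H.neighborSet v).ncard ≠ 0 := by
    exact ((Set.ncard_pos (Set.toFinite _)).2 ⟨w, hw⟩).ne'
  have := hl v hv
  omega

end Prune

/-! ### The tree and its edges -/

/-- Reachability is preserved by maps that send adjacent vertices to mutually reachable ones. -/
lemma reachable_of_map {A B : Type*} {G : SimpleGraph A} {G' : SimpleGraph B} (f : A → B)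
    (hf : ∀ x y, G.Adj x y → G'.Reachable (f x) (f y)) {x y : A} (h : G.Reachable x y) :
    G'.Reachable (f x) (f y) := by
  obtain ⟨p⟩ := h
  induction p with
  | nil => exact SimpleGraph.Reachable.refl _
  | cons hadj _ ih => exact (hf _ _ hadj).trans ih

section Tree

variable {VT : Type} {T : SimpleGraph VT}

lemma not_reachable_of_isTree (hT : T.IsTree) {a b : VT} (hab : T.Adj a b) :
    ¬ (T.deleteEdges {s(a, b)}).Reachable a b :=
  SimpleGraph.isBridge_iff.1 (SimpleGraph.isAcyclic_iff_forall_adj_isBridge.1 hT.2 hab)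

lemma side_or_side (hT : T.IsTree) (a b x : VT) :
    (T.deleteEdges {s(a, b)}).Reachable a x ∨ (T.deleteEdges {s(a, b)}).Reachable b x := by
  obtain ⟨p⟩ := hT.1.preconnected x a
  induction p with
  | nil => exact Or.inl (SimpleGraph.Reachable.refl _)
  | @cons u v w hadj _ ih =>
    by_cases he : s(u, v) = s(w, b)
    · rcases Sym2.eq_iff.1 he with ⟨rfl, -⟩ | ⟨rfl, -⟩
      · exact Or.inl (SimpleGraph.Reachable.refl _)
      · exact Or.inr (SimpleGraph.Reachable.refl _)
    · have h : (T.deleteEdges {s(w, b)}).Adj v u := by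
        rw [SimpleGraph.deleteEdges_adj]
        exact ⟨hadj.symm, fun h => he (Sym2.eq_swap.trans h)⟩
      exact ih.imp (fun k => k.trans h.reachable) (fun k => k.trans h.reachable)

lemma side_iff_not_side (hT : T.IsTree) {a b : VT} (hab : T.Adj a b) (x : VT) :
    (T.deleteEdges {s(b, a)}).Reachable b x ↔ ¬ (T.deleteEdges {s(a, b)}).Reachable a x := by
  rw [Sym2.eq_swap (a := b)]
  constructor
  · intro h1 h2
    exact not_reachable_of_isTree hT hab (h2.trans h1.symm)
  · intro h
    exact (side_or_side hT a b x).resolve_left h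

/-- A walk ending outside `S` either stays outside `S` or has a last exit edge `ab` from `S`. -/
lemma reachable_or_exists_exit (S : Set VT) {u w : VT} (hw : w ∉ S) (p : T.Walk u w) :
    (u ∉ S ∧ (T.deleteEdges {e | ∃ c ∈ S, c ∈ e}).Reachable u w) ∨
      ∃ a ∈ S, ∃ b ∉ S, T.Adj a b ∧ (T.deleteEdges {e | ∃ c ∈ S, c ∈ e}).Reachable b w := by
  induction p with
  | nil => exact Or.inl ⟨hw, SimpleGraph.Reachable.refl _⟩
  | @cons u v w hadj _ ih =>
    rcases ih hw with ⟨hv, hr⟩ | h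
    · by_cases hu : u ∈ S
      · exact Or.inr ⟨u, hu, v, hv, hadj, hr⟩
      · refine Or.inl ⟨hu, SimpleGraph.Reachable.trans (SimpleGraph.Adj.reachable ?_) hr⟩
        rw [SimpleGraph.deleteEdges_adj]
        refine ⟨hadj, ?_⟩
        rintro ⟨c, hc, hce⟩
        rcases Sym2.mem_iff.1 hce with rfl | rfl
        · exact hu hc
        · exact hv hc
    · exact Or.inr h

/-- A connected set of stem vertices that avoids an endpoint of an edge stays connected when the
edge is deleted. -/
lemma reachable_of_induce {S : Set VT} (hS : (T.induce S).Connected) {a b x y : VT} (hb : b ∉ S)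
    (hx : x ∈ S) (hy : y ∈ S) : (T.deleteEdges {s(a, b)}).Reachable x y := by
  refine reachable_of_map (G := T.induce S) Subtype.val ?_ (hS.preconnected ⟨x, hx⟩ ⟨y, hy⟩)
  rintro ⟨u, hu⟩ ⟨v, hv⟩ huv
  refine SimpleGraph.Adj.reachable ?_
  rw [SimpleGraph.deleteEdges_adj]
  refine ⟨huv, fun he => ?_⟩
  rcases Sym2.eq_iff.1 he with ⟨-, rfl⟩ | ⟨rfl, -⟩
  · exact hb hv
  · exact hb hu

/-- Two disjoint subtrees are separated by an edge. -/
lemma exists_separating_edge (hT : T.IsTree) {S S' : Set VT} (hne : S.Nonempty)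
    (hne' : S'.Nonempty) (hS : (T.induce S).Connected) (hS' : (T.induce S').Connected)
    (hdisj : Disjoint S S') :
    ∃ a b, T.Adj a b ∧ (∀ x ∈ S, (T.deleteEdges {s(a, b)}).Reachable a x) ∧
      ∀ x ∈ S', (T.deleteEdges {s(b, a)}).Reachable b x := by
  obtain ⟨s, hs⟩ := hne
  obtain ⟨s', hs'⟩ := hne'
  obtain ⟨p⟩ := hT.1.preconnected s s'
  rcases reachable_or_exists_exit S (hdisj.notMem_of_mem_right hs') p with
    ⟨h, -⟩ | ⟨a, ha, b, hb, hab, hr⟩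
  · exact absurd hs h
  refine ⟨a, b, hab, fun x hx => reachable_of_induce hS hb ha hx, fun x hx => ?_⟩
  refine SimpleGraph.Reachable.trans (hr.mono ?_)
    (reachable_of_induce hS' (hdisj.notMem_of_mem_left ha) hs' hx)
  refine SimpleGraph.deleteEdges_anti ?_
  rintro e rfl
  exact ⟨a, ha, Sym2.mem_mk_right b a⟩

end Tree

/-! ### Adjacency in a bunch of grapes -/

section Grapes

variable {VT : Type} {T : SimpleGraph VT} {ℓ : VT → ℕ}

/-- A stem vertex, as a vertex of the bunch of grapes. -/
def stemV (ℓ : VT → ℕ) (v : VT) : GrapeVert VT ℓ := Sum.inl v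

/-- The `j`-th vertex off the stem of the grape `g`. -/
def grapeV (g : Σ v : VT, Fin (ℓ v)) (j : Fin 2) : GrapeVert VT ℓ := Sum.inr ⟨g.1, (g.2, j)⟩

lemma vert_cases (x : GrapeVert VT ℓ) : (∃ v, x = stemV ℓ v) ∨ ∃ g j, x = grapeV g j := by
  rcases x with v | ⟨v, i, j⟩
  · exact Or.inl ⟨v, rfl⟩
  · exact Or.inr ⟨⟨v, i⟩, j, rfl⟩

@[simp] lemma stemOf_stemV (v : VT) : stemOf (stemV ℓ v) = v := rfl

@[simp] lemma stemOf_grapeV (g : Σ v : VT, Fin (ℓ v)) (j : Fin 2) :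
    stemOf (grapeV g j) = g.1 := rfl

@[simp] lemma stemV_inj {u v : VT} : stemV ℓ u = stemV ℓ v ↔ u = v :=
  Sum.inl_injective.eq_iff

@[simp] lemma grapeV_inj {g h : Σ v : VT, Fin (ℓ v)} {i j : Fin 2} :
    grapeV g i = grapeV h j ↔ g = h ∧ i = j := by
  constructor
  · intro e
    obtain ⟨g1, g2⟩ := g
    obtain ⟨h1, h2⟩ := h
    have := Sum.inr_injective e
    simp only [Sigma.mk.injEq] at this
    obtain ⟨rfl, h⟩ := this
    simpa using h
  · rintro ⟨rfl, rfl⟩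
    rfl

@[simp] lemma stemV_ne_grapeV {v : VT} {g : Σ v : VT, Fin (ℓ v)} {j : Fin 2} :
    stemV ℓ v ≠ grapeV g j := Sum.inl_ne_inr

@[simp] lemma grapeV_ne_stemV {v : VT} {g : Σ v : VT, Fin (ℓ v)} {j : Fin 2} :
    grapeV g j ≠ stemV ℓ v := Sum.inr_ne_inl

lemma bunch_adj {x y : GrapeVert VT ℓ} : (bunchOfGrapes T ℓ).Adj x y ↔
    ((∃ u v, T.Adj u v ∧ s(x, y) = s(stemV ℓ u, stemV ℓ v)) ∨
      (∃ g j, s(x, y) = s(stemV ℓ g.1, grapeV g j)) ∨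
      ∃ g : Σ v : VT, Fin (ℓ v), s(x, y) = s(grapeV g 0, grapeV g 1)) ∧ x ≠ y := by
  unfold bunchOfGrapes
  rw [SimpleGraph.fromEdgeSet_adj]
  refine and_congr_left fun _ => ?_
  simp only [Set.mem_union, Set.mem_ofPred_eq, or_assoc]
  refine or_congr Iff.rfl (or_congr ?_ ?_)
  · exact ⟨fun ⟨v, i, j, h⟩ => ⟨⟨v, i⟩, j, h⟩, fun ⟨⟨v, i⟩, j, h⟩ => ⟨v, i, j, h⟩⟩
  · exact ⟨fun ⟨v, i, h⟩ => ⟨⟨v, i⟩, h⟩, fun ⟨⟨v, i⟩, h⟩ => ⟨v, i, h⟩⟩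

@[simp] lemma adj_stem_stem {u v : VT} :
    (bunchOfGrapes T ℓ).Adj (stemV ℓ u) (stemV ℓ v) ↔ T.Adj u v := by
  rw [bunch_adj]
  constructor
  · rintro ⟨⟨a, b, hab, h⟩ | ⟨g, j, h⟩ | ⟨g, h⟩, -⟩
    · simp only [Sym2.eq_iff, stemV_inj] at h
      rcases h with ⟨rfl, rfl⟩ | ⟨rfl, rfl⟩
      · exact hab
      · exact hab.symm
    · simp at h
    · simp at h
  · intro h
    exact ⟨Or.inl ⟨u, v, h, rfl⟩, by simpa using h.ne⟩

@[simp] lemma adj_stem_grape {v : VT} {g : Σ v : VT, Fin (ℓ v)} {j : Fin 2} :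
    (bunchOfGrapes T ℓ).Adj (stemV ℓ v) (grapeV g j) ↔ v = g.1 := by
  rw [bunch_adj]
  constructor
  · rintro ⟨⟨a, b, hab, h⟩ | ⟨g, j, h⟩ | ⟨g, h⟩, -⟩
    · simp at h
    · simp only [Sym2.eq_iff, stemV_inj, grapeV_inj, stemV_ne_grapeV, false_and, or_false] at h
      rw [h.1, h.2.1]
    · simp at h
  · rintro rfl
    exact ⟨Or.inr (Or.inl ⟨g, j, rfl⟩), by simp⟩

@[simp] lemma adj_grape_stem {v : VT} {g : Σ v : VT, Fin (ℓ v)} {j : Fin 2} :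
    (bunchOfGrapes T ℓ).Adj (grapeV g j) (stemV ℓ v) ↔ v = g.1 := by
  rw [SimpleGraph.adj_comm, adj_stem_grape]

@[simp] lemma adj_grape_grape {g h : Σ v : VT, Fin (ℓ v)} {i j : Fin 2} :
    (bunchOfGrapes T ℓ).Adj (grapeV g i) (grapeV h j) ↔ g = h ∧ i ≠ j := by
  rw [bunch_adj]
  constructor
  · rintro ⟨⟨a, b, hab, h⟩ | ⟨g, j, h⟩ | ⟨g, h⟩, hne⟩
    · simp at h
    · simp at h
    · simp only [Sym2.eq_iff, grapeV_inj] at h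
      rcases h with ⟨⟨rfl, rfl⟩, rfl, rfl⟩ | ⟨⟨rfl, rfl⟩, rfl, rfl⟩ <;> simp
  · rintro ⟨rfl, hij⟩
    refine ⟨Or.inr (Or.inr ⟨g, ?_⟩), by simpa using hij⟩
    have : (i = 0 ∧ j = 1) ∨ (i = 1 ∧ j = 0) := by omega
    rcases this with ⟨rfl, rfl⟩ | ⟨rfl, rfl⟩
    · rfl
    · exact Sym2.eq_swap

lemma stemOf_of_adj {x y : GrapeVert VT ℓ} (h : (bunchOfGrapes T ℓ).Adj x y) :
    stemOf x = stemOf y ∨ ∃ u v, T.Adj u v ∧ x = stemV ℓ u ∧ y = stemV ℓ v := by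
  rcases vert_cases x with ⟨u, rfl⟩ | ⟨g, i, rfl⟩ <;>
  rcases vert_cases y with ⟨v, rfl⟩ | ⟨k, j, rfl⟩
  · exact Or.inr ⟨u, v, by simpa using h, rfl, rfl⟩
  · left; simpa using h
  · left; simpa using (adj_grape_stem.1 h).symm
  · left; simp [(adj_grape_grape.1 h).1]

/-! ### Standard subgraphs -/

variable [Fintype VT] [DecidableEq VT]

lemma grape_closed {H : (bunchOfGrapes T ℓ).Subgraph} (hH : MinDegTwo H)
    {g : Σ v : VT, Fin (ℓ v)} {j : Fin 2} (hg : grapeV g j ∈ H.verts) :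
    H.Adj (grapeV g j) (stemV ℓ g.1) ∧ H.Adj (grapeV g j) (grapeV g (1 - j)) := by
  have hsub : H.neighborSet (grapeV g j) ⊆ {stemV ℓ g.1, grapeV g (1 - j)} := by
    intro y hy
    have hadj := H.adj_sub hy
    rcases vert_cases y with ⟨v, rfl⟩ | ⟨k, i, rfl⟩
    · left; simpa using hadj
    · right
      obtain ⟨rfl, hne⟩ := adj_grape_grape.1 hadj
      simp only [Set.mem_singleton_iff, grapeV_inj, true_and]
      omega
  have hle : ({stemV ℓ g.1, grapeV g (1 - j)} : Set (GrapeVert VT ℓ)).ncard ≤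
      (H.neighborSet (grapeV g j)).ncard :=
    (Set.ncard_pair (by simp)).le.trans (hH _ hg)
  have heq := Set.eq_of_subset_of_ncard_le hsub hle (Set.toFinite _)
  constructor
  · change _ ∈ H.neighborSet _
    rw [heq]; simp
  · change _ ∈ H.neighborSet _
    rw [heq]; simp

lemma stemOf_mem {H : (bunchOfGrapes T ℓ).Subgraph} (hH : MinDegTwo H) {x : GrapeVert VT ℓ}
    (hx : x ∈ H.verts) : stemV ℓ (stemOf x) ∈ H.verts := by
  rcases vert_cases x with ⟨u, rfl⟩ | ⟨g, i, rfl⟩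
  · exact hx
  · exact H.edge_vert (grape_closed hH hx).1.symm

lemma exists_stem_notMem {H : (bunchOfGrapes T ℓ).Subgraph} (hne : H.verts.Nonempty)
    (hH : (orth H).edgeSet.Nonempty) : ∃ v, stemV ℓ v ∉ H.verts := by
  by_contra! hall
  have : Nonempty (GrapeVert VT ℓ) := hne.to_type
  obtain ⟨e, he⟩ := hH
  induction e with | h x y =>
  rw [SimpleGraph.Subgraph.mem_edgeSet] at he
  have h1 := (prune_le_pruneStep _).2 he
  rw [pruneStep, SimpleGraph.Subgraph.deleteVerts_adj] at h1
  obtain ⟨hx, hx', -⟩ := h1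
  apply hx'
  rcases vert_cases x with ⟨u, rfl⟩ | ⟨g, i, rfl⟩
  · exact absurd (hall u) hx.2
  -- off the stem, the only remaining neighbour is the third vertex of the grape
  have hsub : (((⊤ : (bunchOfGrapes T ℓ).Subgraph).deleteVerts H.verts).neighborSet
      (grapeV g i)) ⊆ {grapeV g (1 - i)} := by
    intro z hz
    have hz' := SimpleGraph.Subgraph.deleteVerts_adj.1 hz
    obtain ⟨-, -, -, hzH, hadj⟩ := hz'
    rcases vert_cases z with ⟨v, rfl⟩ | ⟨k, j, rfl⟩
    · exact absurd (hall v) hzH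
    · obtain ⟨rfl, hne⟩ := adj_grape_grape.1 (SimpleGraph.Subgraph.top_adj.1 hadj)
      simp only [Set.mem_singleton_iff, grapeV_inj, true_and]
      omega
  exact (Set.ncard_le_ncard hsub (Set.toFinite _)).trans (Set.ncard_singleton _).le

lemma mem_grapeEdges {g : Σ v : VT, Fin (ℓ v)} {x y : GrapeVert VT ℓ} :
    s(x, y) ∈ grapeEdges g ↔ s(x, y) = s(stemV ℓ g.1, grapeV g 0) ∨
      s(x, y) = s(stemV ℓ g.1, grapeV g 1) ∨ s(x, y) = s(grapeV g 0, grapeV g 1) :=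
  Iff.rfl

/-- The grapes of a subgraph satisfying `MinDegTwo` occur as whole triangles. -/
lemma adj_of_mem_grapeEdges {H : (bunchOfGrapes T ℓ).Subgraph} (hH : MinDegTwo H)
    {g : Σ v : VT, Fin (ℓ v)} (hg : grapeV g 0 ∈ H.verts) {x y : GrapeVert VT ℓ}
    (h : s(x, y) ∈ grapeEdges g) : H.Adj x y := by
  have h0 := grape_closed hH hg
  have h1 := grape_closed hH (H.edge_vert h0.2.symm)
  rw [← SimpleGraph.Subgraph.mem_edgeSet]
  rcases mem_grapeEdges.1 h with h | h | h <;> rw [h, SimpleGraph.Subgraph.mem_edgeSet]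
  · exact h0.1.symm
  · exact h1.1.symm
  · exact h0.2

lemma grape_mem {H : (bunchOfGrapes T ℓ).Subgraph} (hH : MinDegTwo H)
    {g : Σ v : VT, Fin (ℓ v)} {j : Fin 2} (hg : grapeV g j ∈ H.verts) (i : Fin 2) :
    grapeV g i ∈ H.verts := by
  have h : i = j ∨ i = 1 - j := by omega
  rcases h with rfl | rfl
  · exact hg
  · exact H.edge_vert (grape_closed hH hg).2.symm

/-- A stem edge joining two vertices of a connected subgraph is a bridge, hence belongs to the
subgraph. -/
lemma stem_adj_of_connected (hT : T.IsTree) {H : (bunchOfGrapes T ℓ).Subgraph}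
    (hc : H.Connected) {u v : VT} (hu : stemV ℓ u ∈ H.verts) (hv : stemV ℓ v ∈ H.verts)
    (huv : T.Adj u v) : H.Adj (stemV ℓ u) (stemV ℓ v) := by
  by_contra hn
  refine not_reachable_of_isTree hT huv ?_
  refine reachable_of_map (G := H.coe) (fun x => stemOf x.1) ?_
    (hc.preconnected.coe ⟨_, hu⟩ ⟨_, hv⟩)
  rintro ⟨x, hx⟩ ⟨y, hy⟩ hxy
  have hxy' : H.Adj x y := hxy
  rcases stemOf_of_adj (H.adj_sub hxy') with h | ⟨a, b, hab, rfl, rfl⟩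
  · simp [h]
  · refine SimpleGraph.Adj.reachable ?_
    rw [SimpleGraph.deleteEdges_adj]
    refine ⟨hab, fun he => hn ?_⟩
    rcases Sym2.eq_iff.1 he with ⟨h1, h2⟩ | ⟨h1, h2⟩ <;>
      simp only [stemOf_stemV] at h1 h2 <;> subst h1 <;> subst h2
    · exact hxy'
    · exact hxy'.symm

lemma induce_stem_connected {H : (bunchOfGrapes T ℓ).Subgraph} (hc : H.Connected)
    (hH : MinDegTwo H) : (T.induce {v | stemV ℓ v ∈ H.verts}).Connected := by
  rw [SimpleGraph.connected_iff]
  obtain ⟨x, hx⟩ := hc.nonempty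
  refine ⟨?_, ⟨⟨stemOf x, stemOf_mem hH hx⟩⟩⟩
  rintro ⟨u, hu⟩ ⟨v, hv⟩
  refine reachable_of_map (G := H.coe)
    (fun x => (⟨stemOf x.1, stemOf_mem hH x.2⟩ : {v | stemV ℓ v ∈ H.verts})) ?_
    (hc.preconnected.coe ⟨_, hu⟩ ⟨_, hv⟩)
  rintro ⟨x, hx⟩ ⟨y, hy⟩ hxy
  have hxy' : H.Adj x y := hxy
  rcases stemOf_of_adj (H.adj_sub hxy') with h | ⟨a, b, hab, rfl, rfl⟩
  · simp [h]
  · exact SimpleGraph.Adj.reachable (SimpleGraph.induce_adj.2 hab)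

lemma standard_description (hT : T.IsTree) (H : (bunchOfGrapes T ℓ).Subgraph)
    (hst : IsStandard H) :
    ∃ S : Set VT, S.Nonempty ∧ S ≠ Set.univ ∧ (T.induce S).Connected ∧
      ∃ Gr : Set (Σ v : VT, Fin (ℓ v)), (∀ g ∈ Gr, g.1 ∈ S) ∧
        H.verts = (Sum.inl '' S) ∪
          {x : GrapeVert VT ℓ | ∃ g ∈ Gr, ∃ j : Fin 2, x = Sum.inr ⟨g.1, (g.2, j)⟩} ∧
        ∀ x y : GrapeVert VT ℓ, H.Adj x y ↔
          ((∃ u ∈ S, ∃ v ∈ S, T.Adj u v ∧ s(x, y) = s(Sum.inl u, Sum.inl v)) ∨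
            (∃ g ∈ Gr, s(x, y) ∈ grapeEdges g)) := by
  have hH := hst.minDegTwo
  obtain ⟨hc, -, -, ho⟩ := hst
  obtain ⟨x₀, hx₀⟩ := hc.nonempty
  obtain ⟨w, hw⟩ := exists_stem_notMem hc.nonempty ho
  refine ⟨{v | stemV ℓ v ∈ H.verts}, ⟨_, stemOf_mem hH hx₀⟩,
    fun h => hw ((Set.ext_iff.1 h w).2 trivial), induce_stem_connected hc hH,
    {g | grapeV g 0 ∈ H.verts}, fun g hg => stemOf_mem hH hg, ?_, ?_⟩
  · ext x
    constructor
    · intro hx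
      rcases vert_cases x with ⟨v, rfl⟩ | ⟨g, j, rfl⟩
      · exact Or.inl ⟨v, hx, rfl⟩
      · exact Or.inr ⟨g, grape_mem hH hx 0, j, rfl⟩
    · rintro (⟨v, hv, rfl⟩ | ⟨g, hg, j, rfl⟩)
      · exact hv
      · exact grape_mem hH hg j
  · intro x y
    constructor
    · intro hxy
      have hx := H.edge_vert hxy
      have hy := H.edge_vert hxy.symm
      rcases (bunch_adj.1 (H.adj_sub hxy)).1 with ⟨u, v, huv, h⟩ | ⟨g, j, h⟩ | ⟨g, h⟩
      · refine Or.inl ⟨u, ?_, v, ?_, huv, h⟩ <;>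
          rcases Sym2.eq_iff.1 h with ⟨rfl, rfl⟩ | ⟨rfl, rfl⟩ <;> assumption
      · refine Or.inr ⟨g, grape_mem hH (j := j) ?_ 0, mem_grapeEdges.2 ?_⟩
        · rcases Sym2.eq_iff.1 h with ⟨rfl, rfl⟩ | ⟨rfl, rfl⟩ <;> assumption
        · have hj : j = 0 ∨ j = 1 := by omega
          rcases hj with rfl | rfl
          · exact Or.inl h
          · exact Or.inr (Or.inl h)
      · refine Or.inr ⟨g, ?_, mem_grapeEdges.2 (Or.inr (Or.inr h))⟩
        rcases Sym2.eq_iff.1 h with ⟨rfl, rfl⟩ | ⟨rfl, rfl⟩ <;> assumption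
    · rintro (⟨u, hu, v, hv, huv, h⟩ | ⟨g, hg, h⟩)
      · rw [← SimpleGraph.Subgraph.mem_edgeSet, h]
        exact stem_adj_of_connected hT hc hu hv huv
      · exact adj_of_mem_grapeEdges hH hg h

/-! ### The components of a stem edge -/

lemma tComponent_adj {a b : VT} {x y : GrapeVert VT ℓ} : (tComponent T ℓ a b).Adj x y ↔
    inSide T ℓ a b x ∧ inSide T ℓ a b y ∧ (bunchOfGrapes T ℓ).Adj x y := by
  simp [tComponent]

lemma tComponent_compl (hT : T.IsTree) {a b : VT} (hab : T.Adj a b) :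
    (⊤ : (bunchOfGrapes T ℓ).Subgraph).deleteVerts (tComponent T ℓ a b).verts =
      tComponent T ℓ b a := by
  refine congrArg (SimpleGraph.Subgraph.induce ⊤) (Set.ext fun x => ?_)
  exact (and_iff_right trivial).trans (side_iff_not_side hT hab (stemOf x)).symm

lemma tComponent_minDegTwo (hn : IsNormalGrapes T ℓ) {a b : VT} (hab : T.Adj a b) :
    MinDegTwo (tComponent T ℓ a b) := by
  obtain ⟨hT, -, hd1, hd2⟩ := hn
  intro x hx
  have hx' : inSide T ℓ a b x := hx
  rcases vert_cases x with ⟨v, rfl⟩ | ⟨g, j, rfl⟩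
  · rcases Nat.eq_zero_or_pos (ℓ v) with h0 | hpos
    · -- a stem vertex without grapes has at least three neighbours on the stem
      have : Nontrivial VT := ⟨a, b, hab.ne⟩
      obtain ⟨w, hw⟩ := hT.1.preconnected.exists_adj_of_nontrivial v
      have hne0 : (T.neighborSet v).ncard ≠ 0 := by
        exact ((Set.ncard_pos (Set.toFinite _)).2 ⟨w, hw⟩).ne'
      have h1 : (T.neighborSet v).ncard ≠ 1 := fun h => by have := hd1 v h; omega
      have h2 : (T.neighborSet v).ncard ≠ 2 := fun h => by have := hd2 v h; omega
      have hsub : stemV ℓ '' (T.neighborSet v \ {b}) ⊆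
          (tComponent T ℓ a b).neighborSet (stemV ℓ v) := by
        rintro _ ⟨u, ⟨hu, hub⟩, rfl⟩
        have hu : T.Adj v u := hu
        refine tComponent_adj.2 ⟨hx', ?_, adj_stem_stem.2 hu⟩
        refine SimpleGraph.Reachable.trans hx' (SimpleGraph.Adj.reachable ?_)
        rw [SimpleGraph.deleteEdges_adj]
        refine ⟨hu, fun he => ?_⟩
        rcases Sym2.eq_iff.1 he with ⟨-, h⟩ | ⟨h, -⟩
        · exact hub h
        · have hv : v = b := h
          subst hv
          exact not_reachable_of_isTree hT hab hx'
      have hle := Set.ncard_le_ncard hsub (Set.toFinite _)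
      rw [Set.ncard_image_of_injective _ (fun _ _ h => stemV_inj.1 h)] at hle
      have := Set.pred_ncard_le_ncard_sdiff_singleton (T.neighborSet v) b
      omega
    · let g : Σ v : VT, Fin (ℓ v) := ⟨v, ⟨0, hpos⟩⟩
      have hsub : {grapeV g 0, grapeV g 1} ⊆ (tComponent T ℓ a b).neighborSet (stemV ℓ v) := by
        rintro _ (rfl | rfl) <;> exact tComponent_adj.2 ⟨hx', hx', adj_stem_grape.2 rfl⟩
      exact (Set.ncard_pair (by simp)).ge.trans (Set.ncard_le_ncard hsub (Set.toFinite _))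
  · have hsub : {stemV ℓ g.1, grapeV g (1 - j)} ⊆
        (tComponent T ℓ a b).neighborSet (grapeV g j) := by
      rintro _ (rfl | rfl)
      · exact tComponent_adj.2 ⟨hx', hx', adj_grape_stem.2 rfl⟩
      · exact tComponent_adj.2 ⟨hx', hx', adj_grape_grape.2 ⟨rfl, by omega⟩⟩
    exact (Set.ncard_pair (by simp)).ge.trans (Set.ncard_le_ncard hsub (Set.toFinite _))

lemma orth_tComponent (hn : IsNormalGrapes T ℓ) {a b : VT} (hab : T.Adj a b) :
    orth (tComponent T ℓ a b) = tComponent T ℓ b a := by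
  rw [orth, tComponent_compl hn.1 hab, (tComponent_minDegTwo hn hab.symm).prune_eq]

lemma tComponent_connected (a b : VT) : (tComponent T ℓ a b).Connected := by
  have ha : stemV ℓ a ∈ (tComponent T ℓ a b).verts :=
    SimpleGraph.Reachable.refl (G := T.deleteEdges {s(a, b)}) a
  -- the stem part of the side is reached along the tree
  have key : ∀ v, (T.deleteEdges {s(a, b)}).Reachable a v →
      ∃ hv : stemV ℓ v ∈ (tComponent T ℓ a b).verts,
        (tComponent T ℓ a b).coe.Reachable ⟨_, ha⟩ ⟨_, hv⟩ := by
    intro v hv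
    rw [SimpleGraph.reachable_iff_reflTransGen] at hv
    induction hv with
    | refl => exact ⟨ha, SimpleGraph.Reachable.refl _⟩
    | @tail u w _ huw ih =>
      obtain ⟨hu, hr⟩ := ih
      have hw : stemV ℓ w ∈ (tComponent T ℓ a b).verts :=
        SimpleGraph.Reachable.trans (G := T.deleteEdges {s(a, b)}) hu huw.reachable
      refine ⟨hw, hr.trans (SimpleGraph.Adj.reachable ?_)⟩
      exact tComponent_adj.2 ⟨hu, hw, adj_stem_stem.2 (SimpleGraph.deleteEdges_adj.1 huw).1⟩
  rw [SimpleGraph.Subgraph.connected_iff', SimpleGraph.connected_iff_exists_forall_reachable]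
  refine ⟨⟨_, ha⟩, ?_⟩
  rintro ⟨x, hx⟩
  obtain ⟨hv, hr⟩ := key (stemOf x) hx
  rcases vert_cases x with ⟨v, rfl⟩ | ⟨g, j, rfl⟩
  · exact hr
  · refine hr.trans (SimpleGraph.Adj.reachable ?_)
    exact tComponent_adj.2 ⟨hv, hx, adj_stem_grape.2 rfl⟩

lemma tComponent_edge (hn : IsNormalGrapes T ℓ) {a b : VT} (hab : T.Adj a b) :
    (tComponent T ℓ a b).edgeSet.Nonempty := by
  obtain ⟨x, hx⟩ := (tComponent_connected (T := T) (ℓ := ℓ) a b).nonempty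
  have h2 := tComponent_minDegTwo hn hab x hx
  obtain ⟨y, hy⟩ := (Set.ncard_pos (Set.toFinite _)).1
    (show 0 < ((tComponent T ℓ a b).neighborSet x).ncard by omega)
  exact ⟨s(x, y), hy⟩

lemma tComponent_isStandard (hn : IsNormalGrapes T ℓ) {a b : VT} (hab : T.Adj a b) :
    IsStandard (tComponent T ℓ a b) := by
  refine ⟨tComponent_connected a b, tComponent_edge hn hab, fun v hv => ?_, ?_⟩
  · have := tComponent_minDegTwo hn hab v hv
    omega
  · rw [orth_tComponent hn hab]
    exact tComponent_edge hn hab.symm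

/-- A subgraph whose vertices lie on one side of an edge is contained in that component. -/
lemma le_tComponent {H : (bunchOfGrapes T ℓ).Subgraph} {a b : VT}
    (h : ∀ x ∈ H.verts, inSide T ℓ a b x) : H ≤ tComponent T ℓ a b :=
  ⟨h, fun _ _ hxy => tComponent_adj.2
    ⟨h _ (H.edge_vert hxy), h _ (H.edge_vert hxy.symm), H.adj_sub hxy⟩⟩

lemma maxStandard_iff (hn : IsNormalGrapes T ℓ) (H : (bunchOfGrapes T ℓ).Subgraph) :
    IsMaxStandard H ↔ ∃ a b : VT, T.Adj a b ∧ H = tComponent T ℓ a b := by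
  constructor
  · rintro ⟨hH, hK, hHH⟩
    have hm := hH.minDegTwo
    have hm' := hK.minDegTwo
    obtain ⟨x, hx⟩ := hH.1.nonempty
    obtain ⟨y, hy⟩ := hK.1.nonempty
    obtain ⟨a, b, hab, hS, hS'⟩ := exists_separating_edge hn.1 ⟨_, stemOf_mem hm hx⟩
      ⟨_, stemOf_mem hm' hy⟩ (induce_stem_connected hH.1 hm) (induce_stem_connected hK.1 hm')
      (Set.disjoint_left.2 fun v hv hv' => ((orth_le H).1 hv').2 hv)
    have hHA : H ≤ tComponent T ℓ a b := le_tComponent fun x hx => hS _ (stemOf_mem hm hx)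
    have hKB : orth H ≤ tComponent T ℓ b a := le_tComponent fun x hx => hS' _ (stemOf_mem hm' hx)
    have hBK : tComponent T ℓ b a ≤ orth H := by
      refine (tComponent_minDegTwo hn hab.symm).le_prune ?_
      rw [← tComponent_compl hn.1 hab]
      exact SimpleGraph.Subgraph.deleteVerts_anti hHA.1
    refine ⟨a, b, hab, ?_⟩
    rw [← hHH, le_antisymm hKB hBK, orth_tComponent hn hab.symm]
  · rintro ⟨a, b, hab, rfl⟩
    refine ⟨tComponent_isStandard hn hab, ?_, ?_⟩
    · rw [orth_tComponent hn hab]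
      exact tComponent_isStandard hn hab.symm
    · rw [orth_tComponent hn hab, orth_tComponent hn hab.symm]

end Grapes

/-- For a normal bunch of grapes `Γ = (T, ℓ)`: (i) every standard
subgraph of `Γ` is the union of a subtree of `T` on a proper vertex subset together with a
collection of grapes attached at its vertices; (ii) a subgraph is maximally standard iff it
is a `t`-component for some edge `t` of the stem. -/
theorem grapes_standard_subgraphs_description
    (VT : Type) [Fintype VT] [DecidableEq VT] (T : SimpleGraph VT) (ℓ : VT → ℕ)
    (hnorm : IsNormalGrapes T ℓ) :
    (∀ H : (bunchOfGrapes T ℓ).Subgraph, IsStandard H →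
      ∃ S : Set VT, S.Nonempty ∧ S ≠ Set.univ ∧ (T.induce S).Connected ∧
        ∃ Gr : Set (Σ v : VT, Fin (ℓ v)), (∀ g ∈ Gr, g.1 ∈ S) ∧
          H.verts = (Sum.inl '' S) ∪
            {x : GrapeVert VT ℓ | ∃ g ∈ Gr, ∃ j : Fin 2, x = Sum.inr ⟨g.1, (g.2, j)⟩} ∧
          ∀ x y : GrapeVert VT ℓ, H.Adj x y ↔
            ((∃ u ∈ S, ∃ v ∈ S, T.Adj u v ∧ s(x, y) = s(Sum.inl u, Sum.inl v)) ∨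
              (∃ g ∈ Gr, s(x, y) ∈ grapeEdges g))) ∧
    (∀ H : (bunchOfGrapes T ℓ).Subgraph,
      IsMaxStandard H ↔ ∃ a b : VT, T.Adj a b ∧ H = tComponent T ℓ a b) := by
  have hT := hnorm.1
  exact ⟨fun H hH => standard_description hT H hH, maxStandard_iff hnorm⟩

end GraphBraid
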